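/- Let B ≥ 2, let q_1, …, q_B ∈ [0,1], define p_i = q_i ∏_{k=1}^{i−1}(1 − q_k) for 1 ≤ i ≤ B and p_{B+1} = ∏_{k=1}^{B}(1 − q_k), and let X_1, …, X_N be i.i.d. random variables with values in {1, …, B+1} and P(X_n = i) = p_i. Let N_i = #{n : X_n = i}, D_i = N − ∑_{j=1}^{i−1} N_j, and define q̂_i = N_i / D_i when D_i > 0 and q̂_i = q_i when D_i = 0. Then for all i ≠ j, E[(q̂_i − q_i)(q̂_j − q_j)] = 0; that is, the Coates estimates for distinct bins are uncorrelated. -/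

import Mathlib

open MeasureTheory ProbabilityTheory

/-!
Write `N_t` and `D_t` for the numbers of cycles with outcome `t` and with outcome at least `t`.
Then `q̂_t - q_t = ∑ n, (1{X_n = t} - q_t 1{t ≤ X_n}) / D_t`, where each numerator is centred and
vanishes unless `t ≤ X_n`. On that event, moving `X_n` to `t` changes neither `D_t` nor any
quantity observed before `t`, so these depend on the other cycles only and are independent of the
numerator. Hence `q̂_t - q_t` is orthogonal to everything observed before `t`, in particular to
`q̂_s - q_s` for `s < t`.
-/

section Independence

variable {Ω ι : Type*} [MeasurableSpace Ω] {μ : Measure Ω} [Finite ι] [DecidableEq ι]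
  {β : ι → Type*} [∀ m, MeasurableSpace (β m)] {X : ∀ m, Ω → β m}

lemma indepFun_update_of_iIndepFun (hX : ∀ m, Measurable (X m)) (hindep : iIndepFun X μ) (n : ι)
    (c : ∀ m, β m) :
    IndepFun (fun ω => Function.update (fun m => X m ω) n (c n)) (X n) μ := by
  have := Fintype.ofFinite ι
  have hrestrict := hindep.indepFun_finset (Finset.univ.erase n) {n} (by simp) hX
  have hupdate : ∀ ω, Function.update (fun m => X m ω) n (c n) =
      Function.updateFinset c (Finset.univ.erase n) (fun m => X m ω) := by
    intro ω
    ext m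
    rcases eq_or_ne m n with rfl | hm <;> simp [Function.updateFinset, *]
  simp only [hupdate]
  exact hrestrict.comp measurable_updateFinset
    (measurable_pi_apply (⟨n, Finset.mem_singleton_self n⟩ : ({n} : Finset ι)))

lemma integral_mul_eq_zero_of_update_eq (hX : ∀ m, Measurable (X m)) (hindep : iIndepFun X μ)
    {n : ι} (c : ∀ m, β m) {G : (∀ m, β m) → ℝ} (hG : Measurable G) {h : β n → ℝ}
    (hh : Measurable h) (hmean : ∫ ω, h (X n ω) ∂μ = 0)
    (hupdate : ∀ x, h (x n) ≠ 0 → G (Function.update x n (c n)) = G x) :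
    ∫ ω, G (fun m => X m ω) * h (X n ω) ∂μ = 0 := by
  have hGh : ∀ x, G x * h (x n) = G (Function.update x n (c n)) * h (x n) := by
    intro x
    by_cases hx : h (x n) = 0
    · simp [hx]
    · rw [hupdate x hx]
  have hindep' := (indepFun_update_of_iIndepFun hX hindep n c).comp hG hh
  calc ∫ ω, G (fun m => X m ω) * h (X n ω) ∂μ
      = ∫ ω, G (Function.update (fun m => X m ω) n (c n)) * h (X n ω) ∂μ := by
        simp only [hGh fun m => X m _]
    _ = (∫ ω, G (Function.update (fun m => X m ω) n (c n)) ∂μ) * ∫ ω, h (X n ω) ∂μ :=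
        hindep'.integral_fun_mul_eq_mul_integral
          (hG.comp (measurable_update_left.comp (measurable_pi_lambda _ hX))).aestronglyMeasurable
          (hh.comp (hX n)).aestronglyMeasurable
    _ = 0 := by rw [hmean, mul_zero]

end Independence

section Estimator

variable {ι T : Type*} [LinearOrder T] {s t : T}

/-- The outcomes as observed just before time `t`: a cycle without a detection before `t` is
recorded as `t`. -/
def censor (t : T) (x : ι → T) : ι → T :=
  fun n => min (x n) t

/-- The contribution `1{a = t} - r 1{t ≤ a}` of a cycle with outcome `a` to `N_t - r D_t`. -/
noncomputable def binResidual (r : ℝ) (t a : T) : ℝ :=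
  Set.indicator {t} 1 a - r * Set.indicator (Set.Ici t) 1 a

lemma censor_update [DecidableEq ι] {x : ι → T} {n : ι} (h : t ≤ x n) :
    censor t (Function.update x n t) = censor t x := by
  ext m
  rcases eq_or_ne m n with rfl | hm <;> simp [censor, *]

variable [Fintype ι]

/-- The histogram count `N_t` of the bin `t`. -/
def binCount (x : ι → T) (t : T) : ℕ :=
  (Finset.univ.filter fun n => x n = t).card

/-- The number `D_t` of cycles without a detection before `t`. -/
def survivorCount (x : ι → T) (t : T) : ℕ :=
  (Finset.univ.filter fun n => t ≤ x n).card

/-- The Coates estimate `N_t / D_t` of the conditional detection probability in the bin `t`, with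
default value `r` when there are no survivors. -/
noncomputable def coatesEstimate (r : ℝ) (x : ι → T) (t : T) : ℝ :=
  if 0 < survivorCount x t then (binCount x t : ℝ) / survivorCount x t else r

lemma survivorCount_eq_card_sub_sum (x : ι → ℕ) (k : ℕ) :
    survivorCount x k = Fintype.card ι - ∑ l ∈ Finset.range k, binCount x l := by
  have hlt : ∑ l ∈ Finset.range k, binCount x l = (Finset.univ.filter fun n => x n < k).card := by
    simp only [binCount, Finset.sum_card_fiberwise_eq_card_filter, Finset.mem_range]
  have hsum := Finset.card_filter_add_card_filter_not (s := (Finset.univ : Finset ι))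
    (fun n => x n < k)
  simp only [not_lt, Finset.card_univ] at hsum
  rw [survivorCount, hlt, ← hsum, Nat.add_sub_cancel_left]

lemma binResidual_of_lt (r : ℝ) {a : T} (h : a < t) : binResidual r t a = 0 := by
  simp [binResidual, h, h.ne]

lemma abs_binResidual_le (r : ℝ) (t a : T) : |binResidual r t a| ≤ 1 + |r| := by
  have hle : ∀ S : Set T, |S.indicator (1 : T → ℝ) a| ≤ 1 := fun S => by
    by_cases ha : a ∈ S <;> simp [ha]
  calc |binResidual r t a|
      ≤ |Set.indicator {t} (1 : T → ℝ) a| + |r| * |(Set.Ici t).indicator (1 : T → ℝ) a| := by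
        rw [← abs_mul]; exact abs_sub _ _
    _ ≤ 1 + |r| := add_le_add (hle _) (mul_le_of_le_one_right (abs_nonneg r) (hle _))

lemma sum_binResidual (r : ℝ) (x : ι → T) (t : T) :
    ∑ n, binResidual r t (x n) = binCount x t - r * survivorCount x t := by
  simp only [binResidual, Finset.sum_sub_distrib, ← Finset.mul_sum]
  simp [binCount, survivorCount, Set.indicator_apply]

lemma coatesEstimate_sub_eq_sum (r : ℝ) (x : ι → T) (t : T) :
    coatesEstimate r x t - r = ∑ n, binResidual r t (x n) / survivorCount x t := by
  rw [← Finset.sum_div, sum_binResidual, coatesEstimate]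
  split_ifs with h
  · have : (survivorCount x t : ℝ) ≠ 0 := by positivity
    field_simp
  · -- Without survivors both sides vanish, the right one because `a / 0 = 0`.
    simp [Nat.eq_zero_of_not_pos h]

lemma survivorCount_censor (x : ι → T) (h : s ≤ t) :
    survivorCount (censor t x) s = survivorCount x s := by
  simp [survivorCount, censor, h]

lemma binCount_censor (x : ι → T) (h : s < t) : binCount (censor t x) s = binCount x s := by
  have hmin : ∀ a, min a t = s ↔ a = s := by grind
  simp only [binCount, censor, hmin]

lemma coatesEstimate_censor (r : ℝ) (x : ι → T) (h : s < t) :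
    coatesEstimate r (censor t x) s = coatesEstimate r x s := by
  rw [coatesEstimate, survivorCount_censor x h.le, binCount_censor x h, coatesEstimate]

end Estimator

section Measurability

variable {ι T : Type*} [LinearOrder T] [TopologicalSpace T] [OrderClosedTopology T]
  [MeasurableSpace T] [OpensMeasurableSpace T]

@[fun_prop]
lemma measurable_binResidual (r : ℝ) (t : T) : Measurable (binResidual r t) :=
  (measurable_one.indicator (measurableSet_singleton t)).sub
    ((measurable_one.indicator measurableSet_Ici).const_mul r)

variable [Fintype ι]

@[fun_prop]
lemma measurable_survivorCount (t : T) : Measurable fun x : ι → T => survivorCount x t := by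
  simp only [survivorCount, Finset.card_filter]
  exact Finset.measurable_fun_sum _ fun n _ =>
    Measurable.ite (measurable_pi_apply n measurableSet_Ici) measurable_const measurable_const

lemma measurable_coatesEstimate_sub (r : ℝ) (t : T) :
    Measurable fun x : ι → T => coatesEstimate r x t - r := by
  simp only [coatesEstimate_sub_eq_sum]
  fun_prop

end Measurability

section Expectation

variable {Ω ι T : Type*} [MeasurableSpace Ω] {μ : Measure Ω} [Fintype ι] [LinearOrder T]
  [TopologicalSpace T] [OrderClosedTopology T] [MeasurableSpace T] [OpensMeasurableSpace T]
  {X : ι → Ω → T} {s t : T}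

lemma integral_binResidual [IsFiniteMeasure μ] {Y : Ω → T} (hY : Measurable Y) (r : ℝ) (t : T) :
    ∫ ω, binResidual r t (Y ω) ∂μ = μ.real {ω | Y ω = t} - r * μ.real {ω | t ≤ Y ω} := by
  have hmean : ∀ S : Set T, MeasurableSet S →
      ∫ ω, S.indicator (1 : T → ℝ) (Y ω) ∂μ = μ.real (Y ⁻¹' S) :=
    fun S hS => integral_indicator_one (hY hS)
  have hint : ∀ S : Set T, MeasurableSet S →
      Integrable (fun ω => S.indicator (1 : T → ℝ) (Y ω)) μ :=
    fun S hS => (integrable_const (1 : ℝ)).indicator (hY hS)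
  have ht := measurableSet_singleton t
  have hIci := measurableSet_Ici (a := t)
  simp only [binResidual]
  rw [integral_sub (hint _ ht) ((hint _ hIci).const_mul r), integral_const_mul, hmean _ ht,
    hmean _ hIci]
  rfl

lemma integrable_mul_binResidual_div (hX : ∀ n, Measurable (X n)) {f : Ω → ℝ}
    (hf : Integrable f μ) (r : ℝ) (t : T) (n : ι) :
    Integrable (fun ω =>
      f ω * (binResidual r t (X n ω) / survivorCount (fun m => X m ω) t)) μ := by
  refine hf.mul_bdd (c := 1 + |r|) (Measurable.aestronglyMeasurable ?_)
    (Filter.Eventually.of_forall fun ω => ?_)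
  · fun_prop
  · rw [Real.norm_eq_abs, abs_div, Nat.abs_cast]
    exact (div_nat_le_self_of_nonnneg (abs_nonneg _) _).trans (abs_binResidual_le r t _)

lemma integrable_coatesEstimate_sub [IsFiniteMeasure μ] (hX : ∀ n, Measurable (X n)) (r : ℝ)
    (t : T) : Integrable (fun ω => coatesEstimate r (fun n => X n ω) t - r) μ := by
  simp only [coatesEstimate_sub_eq_sum]
  exact integrable_finsetSum _ fun n _ => by
    simpa only [one_mul] using integrable_mul_binResidual_div hX (integrable_const (1 : ℝ)) r t n

lemma integral_mul_binResidual_div_eq_zero (hX : ∀ n, Measurable (X n))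
    (hindep : iIndepFun X μ) {r : ℝ} {n : ι}
    (hhazard : μ.real {ω | X n ω = t} = r * μ.real {ω | t ≤ X n ω})
    {F : (ι → T) → ℝ} (hF : Measurable F) (hcensor : ∀ x, F (censor t x) = F x) :
    ∫ ω, F (fun m => X m ω) *
      (binResidual r t (X n ω) / survivorCount (fun m => X m ω) t) ∂μ = 0 := by
  classical
  have := hindep.isProbabilityMeasure
  have hmean : ∫ ω, binResidual r t (X n ω) ∂μ = 0 := by
    rw [integral_binResidual (hX n), hhazard, sub_self]
  have hupdate : ∀ x : ι → T, binResidual r t (x n) ≠ 0 →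
      F (Function.update x n t) / survivorCount (Function.update x n t) t =
        F x / survivorCount x t := by
    intro x hx
    have hn : t ≤ x n := not_lt.mp fun hlt => hx (binResidual_of_lt r hlt)
    rw [← hcensor, ← survivorCount_censor _ le_rfl, censor_update hn, hcensor,
      survivorCount_censor x le_rfl]
  simp only [← mul_div_assoc, mul_div_right_comm]
  exact integral_mul_eq_zero_of_update_eq hX hindep (fun _ => t)
    (G := fun x => F x / survivorCount x t) (by fun_prop) (measurable_binResidual r t) hmean
    hupdate

theorem integral_mul_coatesEstimate_sub_eq_zero (hX : ∀ n, Measurable (X n))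
    (hindep : iIndepFun X μ) {r : ℝ}
    (hhazard : ∀ n, μ.real {ω | X n ω = t} = r * μ.real {ω | t ≤ X n ω})
    {F : (ι → T) → ℝ} (hF : Measurable F) (hcensor : ∀ x, F (censor t x) = F x)
    (hint : Integrable (fun ω => F (fun n => X n ω)) μ) :
    ∫ ω, F (fun n => X n ω) * (coatesEstimate r (fun n => X n ω) t - r) ∂μ = 0 := by
  simp only [coatesEstimate_sub_eq_sum, Finset.mul_sum]
  rw [integral_finsetSum _ fun n _ => integrable_mul_binResidual_div hX hint r t n]
  exact Finset.sum_eq_zero fun n _ =>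
    integral_mul_binResidual_div_eq_zero hX hindep (hhazard n) hF hcensor

theorem integral_coatesEstimate_sub_mul_eq_zero_of_lt (hX : ∀ n, Measurable (X n))
    (hindep : iIndepFun X μ) (hst : s < t) (r : ℝ) {r' : ℝ}
    (hhazard : ∀ n, μ.real {ω | X n ω = t} = r' * μ.real {ω | t ≤ X n ω}) :
    ∫ ω, (coatesEstimate r (fun n => X n ω) s - r) *
      (coatesEstimate r' (fun n => X n ω) t - r') ∂μ = 0 :=
  have := hindep.isProbabilityMeasure
  integral_mul_coatesEstimate_sub_eq_zero hX hindep hhazard (measurable_coatesEstimate_sub r s)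
    (fun x => by rw [coatesEstimate_censor r x hst]) (integrable_coatesEstimate_sub hX r s)

theorem coates_estimates_uncorrelated_general (hX : ∀ n, Measurable (X n))
    (hindep : iIndepFun X μ) {q : T → ℝ} (hst : s ≠ t)
    (hhazard : ∀ n, ∀ u ∈ ({s, t} : Set T),
      μ.real {ω | X n ω = u} = q u * μ.real {ω | u ≤ X n ω}) :
    ∫ ω, (coatesEstimate (q s) (fun n => X n ω) s - q s) *
      (coatesEstimate (q t) (fun n => X n ω) t - q t) ∂μ = 0 := by
  rcases hst.lt_or_gt with h | h
  · exact integral_coatesEstimate_sub_mul_eq_zero_of_lt hX hindep h _ fun n => hhazard n t (by simp)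
  · simp only [mul_comm (coatesEstimate (q s) _ s - q s)]
    exact integral_coatesEstimate_sub_mul_eq_zero_of_lt hX hindep h _ fun n => hhazard n s (by simp)

end Expectation

lemma measureReal_ge_eq_prod_one_sub {Ω : Type*} [MeasurableSpace Ω] {μ : Measure Ω}
    [IsProbabilityMeasure μ] {q : ℕ → ℝ} {Y : Ω → ℕ} (hY : Measurable Y) {k : ℕ}
    (hdist : ∀ l < k, μ.real {ω | Y ω = l} = q l * ∏ m ∈ Finset.range l, (1 - q m)) :
    μ.real {ω | k ≤ Y ω} = ∏ l ∈ Finset.range k, (1 - q l) := by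
  induction k with
  | zero => simp
  | succ k ih =>
    have hdiff : {ω | k + 1 ≤ Y ω} = {ω | k ≤ Y ω} \ {ω | Y ω = k} := by
      ext ω
      simp only [Set.mem_ofPred_eq, Set.mem_sdiff]
      omega
    have hsub : {ω | Y ω = k} ⊆ {ω | k ≤ Y ω} := fun ω hω => Eq.ge hω
    rw [hdiff, measureReal_sdiff hsub (hY (measurableSet_singleton k)),
      ih fun l hl => hdist l (hl.trans k.lt_succ_self), hdist k k.lt_succ_self,
      Finset.prod_range_succ]
    ring

/-- The Coates estimates for distinct bins are uncorrelated:
`E[(q̂ i − q i)(q̂ j − q j)] = 0` for `i ≠ j`. -/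
theorem coates_estimates_uncorrelated
    {Ω : Type*} [MeasurableSpace Ω] (μ : Measure Ω) [IsProbabilityMeasure μ]
    (B : ℕ) (hB : 2 ≤ B) (N : ℕ)
    (q : ℕ → ℝ) (hq : ∀ i, i < B → q i ∈ Set.Icc (0 : ℝ) 1)
    (p : ℕ → ℝ)
    (hp : ∀ i, i < B → p i = q i * ∏ k ∈ Finset.range i, (1 - q k))
    (hpB : p B = ∏ k ∈ Finset.range B, (1 - q k))
    (X : Fin N → Ω → ℕ) (hXmeas : ∀ n, Measurable (X n))
    (hXrange : ∀ n ω, X n ω ≤ B)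
    (hindep : iIndepFun X μ)
    (hdist : ∀ n i, i ≤ B → μ {ω | X n ω = i} = ENNReal.ofReal (p i))
    (Nc : ℕ → Ω → ℕ)
    (hNc : ∀ i ω, Nc i ω = (Finset.univ.filter (fun n : Fin N => X n ω = i)).card)
    (Dc : ℕ → Ω → ℕ)
    (hDc : ∀ i ω, Dc i ω = N - ∑ j ∈ Finset.range i, Nc j ω)
    (qhat : ℕ → Ω → ℝ)
    (hqhat : ∀ i ω, qhat i ω =
      if 0 < Dc i ω then (Nc i ω : ℝ) / (Dc i ω : ℝ) else q i)
    (i j : ℕ) (hi : i < B) (hj : j < B) (hij : i ≠ j) :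
    ∫ ω, (qhat i ω - q i) * (qhat j ω - q j) ∂μ = 0 := by
  have hqhat_eq : ∀ k ω, qhat k ω = coatesEstimate (q k) (fun n => X n ω) k := by
    intro k ω
    simp only [hqhat, hDc, hNc, coatesEstimate, survivorCount_eq_card_sub_sum, binCount,
      Fintype.card_fin]
  have hdist_real : ∀ n, ∀ k < B,
      μ.real {ω | X n ω = k} = q k * ∏ l ∈ Finset.range k, (1 - q l) := by
    intro n k hk
    have hp_nonneg : 0 ≤ q k * ∏ l ∈ Finset.range k, (1 - q l) :=
      mul_nonneg (hq k hk).1 <| Finset.prod_nonneg fun l hl =>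
        sub_nonneg.mpr (hq l ((Finset.mem_range.mp hl).trans hk)).2
    rw [measureReal_def, hdist n k hk.le, hp k hk, ENNReal.toReal_ofReal hp_nonneg]
  have hhazard : ∀ n, ∀ k < B, μ.real {ω | X n ω = k} = q k * μ.real {ω | k ≤ X n ω} := by
    intro n k hk
    rw [measureReal_ge_eq_prod_one_sub (hXmeas n) fun l hl => hdist_real n l (hl.trans hk),
      hdist_real n k hk]
  simp only [hqhat_eq]
  exact coates_estimates_uncorrelated_general hXmeas hindep hij fun n k hk =>
    hhazard n k (by rcases hk with rfl | rfl <;> assumption)
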